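/- arXiv:2007.02405 — 2 statements merged into one kernel-verified Lean document; each statement's English description precedes it below -/
import Mathlib

section
/- Let C be an [n, k, d]_q MDS code with minimum distance d ≥ 3, and let w be a natural number with d - 1 ≤ w ≤ n. Then the overall number A_w^Σ(V^{(1)}) of Hamming-weight-w vectors lying in cosets of C of weight exactly 1 satisfies A_w^Σ(V^{(1)}) = C(n,w) · (q-1) · [ n · ∑_{j=0}^{w+1-d} (-1)^j C(w,j) q^{w+1-d-j} + ε · w · C(w-2, d-3) ], as an identity of integers. -/
open Finset

/-- The weight of the coset `x + C` of the linear code `C ⊆ F_q^n`, i.e. the smallest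
Hamming weight of a vector in `x + C`; equivalently the Hamming distance from `x` to `C`. -/
noncomputable def cosetWeight {F : Type*} [Field F] [Fintype F] [DecidableEq F] {n : ℕ}
    (C : Submodule F (Fin n → F)) (x : Fin n → F) : ℕ :=
  sInf {m : ℕ | ∃ c ∈ C, hammingNorm (x - c) = m}

/-- `A_w(C)`: the number of codewords of `C` of Hamming weight `w`. -/
noncomputable def numCodewordsOfWeight {F : Type*} [Field F] [Fintype F] [DecidableEq F] {n : ℕ}
    (C : Submodule F (Fin n → F)) (w : ℕ) : ℕ :=
  {x : Fin n → F | x ∈ C ∧ hammingNorm x = w}.ncard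

/-- `A_w^Σ(V^{(W)})`: the overall number of Hamming-weight-`w` vectors of `F_q^n` lying in
cosets of `C` of weight exactly `W`. -/
noncomputable def numVectorsCosetExact {F : Type*} [Field F] [Fintype F] [DecidableEq F] {n : ℕ}
    (C : Submodule F (Fin n → F)) (w W : ℕ) : ℕ :=
  {x : Fin n → F | hammingNorm x = w ∧ cosetWeight C x = W}.ncard

/-- `A_w^Σ(V^{≤W})`: the overall number of Hamming-weight-`w` vectors of `F_q^n` lying in
cosets of `C` of weight at most `W`. -/
noncomputable def numVectorsCosetLe {F : Type*} [Field F] [Fintype F] [DecidableEq F] {n : ℕ}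
    (C : Submodule F (Fin n → F)) (w W : ℕ) : ℕ :=
  {x : Fin n → F | hammingNorm x = w ∧ cosetWeight C x ≤ W}.ncard

/-- The code `C` has minimum distance `d`: every nonzero codeword has Hamming weight at
least `d`, and some nonzero codeword has Hamming weight exactly `d`. -/
def HasMinDist {F : Type*} [Field F] [Fintype F] [DecidableEq F] {n : ℕ}
    (C : Submodule F (Fin n → F)) (d : ℕ) : Prop :=
  (∀ c ∈ C, c ≠ 0 → d ≤ hammingNorm c) ∧ ∃ c ∈ C, c ≠ 0 ∧ hammingNorm c = d

/-- The code `C` has covering radius `R`: every vector of `F_q^n` is at Hamming distance at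
most `R` from `C` and some vector is at Hamming distance exactly `R` from `C`. -/
def HasCoveringRadius {F : Type*} [Field F] [Fintype F] [DecidableEq F] {n : ℕ}
    (C : Submodule F (Fin n → F)) (R : ℕ) : Prop :=
  (∀ x : Fin n → F, cosetWeight C x ≤ R) ∧ ∃ x : Fin n → F, cosetWeight C x = R

/-- `V_m(t) = ∑_{i=0}^t (q-1)^i C(m,i)`, the volume of a Hamming sphere of radius `t`
in `F_q^m`, as a rational number. -/
def sphereVol (q m t : ℕ) : ℚ :=
  ∑ i ∈ Finset.range (t + 1), ((q : ℚ) - 1) ^ i * (m.choose i : ℚ)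

/-!
If `2 * W < d`, every coset of weight `W` contains exactly one vector of weight `W`. If
`#S ≥ d - 1`, the vectors supported on `S` together with an MDS code span the whole space, so every
coset contains exactly `q ^ (#S + 1 - d)` vectors supported on `S`. If `#S + W < d`, a vector
supported on `S` lies in a coset of weight `W` only if it has weight `W` itself. For `W = 1` the two
ranges of `#S` cover everything, so the number of vectors supported on `S` in cosets of weight `1`
depends only on `#S`, and inclusion–exclusion over supports counts those of weight `w`. The terms
with `#S ≤ d - 2` collapse to the last binomial coefficient.
-/

section HammingSupport

variable {ι : Type*} [Fintype ι]

/-- The support of a vector, as a finite set; its cardinality is the Hamming norm. -/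
def hammingSupport {β : ι → Type*} [∀ i, Zero (β i)] [∀ i, DecidableEq (β i)]
    (x : ∀ i, β i) : Finset ι :=
  {i | x i ≠ 0}

lemma card_hammingSupport {β : ι → Type*} [∀ i, Zero (β i)] [∀ i, DecidableEq (β i)]
    (x : ∀ i, β i) : #(hammingSupport x) = hammingNorm x :=
  rfl

lemma hammingNorm_sub_le {β : ι → Type*} [∀ i, AddCommGroup (β i)] [∀ i, DecidableEq (β i)]
    (x y : ∀ i, β i) : hammingNorm (x - y) ≤ hammingNorm x + hammingNorm y :=
  calc
    hammingNorm (x - y) = hammingDist y x := by rw [hammingDist_eq_hammingNorm, neg_add_eq_sub]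
    _ ≤ hammingDist y 0 + hammingDist 0 x := hammingDist_triangle y 0 x
    _ = hammingNorm x + hammingNorm y := by
      rw [hammingDist_zero_right, hammingDist_zero_left, add_comm]

variable [DecidableEq ι] {α : Type*} [Zero α] [DecidableEq α] [Fintype α]

lemma card_filter_hammingSupport_eq (T : Finset ι) :
    #{x : ι → α | hammingSupport x = T} = (Fintype.card α - 1) ^ #T := by
  have h_pi : ({x : ι → α | hammingSupport x = T} : Finset (ι → α)) =
      Fintype.piFinset fun i => if i ∈ T then univ.erase 0 else {0} := by
    ext x
    simp only [hammingSupport, Finset.ext_iff, mem_filter_univ, Fintype.mem_piFinset]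
    refine forall_congr' fun i => ?_
    split_ifs with hi <;> simp [hi]
  rw [h_pi, Fintype.card_piFinset]
  simp [apply_ite card, prod_ite_mem]

lemma card_filter_hammingNorm_eq_of_subset (S : Finset ι) (w : ℕ) :
    #{x : ι → α | hammingNorm x = w ∧ hammingSupport x ⊆ S} =
      (#S).choose w * (Fintype.card α - 1) ^ w := by
  have h_maps : Set.MapsTo hammingSupport
      (({x : ι → α | hammingNorm x = w ∧ hammingSupport x ⊆ S} : Finset (ι → α)) : Set (ι → α))
      (S.powersetCard w) := by
    intro x hx
    obtain ⟨hx_norm, hx_sub⟩ : hammingNorm x = w ∧ hammingSupport x ⊆ S := by simpa using hx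
    exact mem_powersetCard.2 ⟨hx_sub, hx_norm⟩
  have h_fiber : ∀ T ∈ S.powersetCard w,
      #{x ∈ ({x : ι → α | hammingNorm x = w ∧ hammingSupport x ⊆ S} : Finset (ι → α)) |
        hammingSupport x = T} = (Fintype.card α - 1) ^ w := by
    intro T hT
    obtain ⟨hTS, hTw⟩ := mem_powersetCard.1 hT
    rw [filter_filter, ← hTw, ← card_filter_hammingSupport_eq T]
    congr 1
    refine filter_congr fun x _ => and_iff_right_of_imp ?_
    rintro rfl
    exact ⟨rfl, hTS⟩
  rw [card_eq_sum_card_fiberwise h_maps, sum_congr rfl h_fiber, sum_const, card_powersetCard,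
    smul_eq_mul]

end HammingSupport

section InclusionExclusion

variable {ι α : Type*} [DecidableEq ι]

lemma card_filter_eq_sum_powerset (A : Finset α) (f : α → Finset ι) (T : Finset ι) :
    (#{a ∈ A | f a = T} : ℤ) = ∑ R ∈ T.powerset, (-1) ^ #R * (#{a ∈ A | f a ⊆ T \ R} : ℤ) := by
  have h_term : ∀ a, (if f a = T then 1 else 0 : ℤ) =
      ∑ R ∈ T.powerset, if f a ⊆ T \ R then (-1) ^ #R else 0 := by
    intro a
    rw [← sum_filter]
    by_cases h_sub : f a ⊆ T
    · have h_powerset : {R ∈ T.powerset | f a ⊆ T \ R} = (T \ f a).powerset := by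
        ext R
        simp only [mem_filter, mem_powerset, subset_sdiff, h_sub, true_and, disjoint_comm]
      rw [h_powerset, sum_powerset_neg_one_pow_card]
      refine if_congr ?_ rfl rfl
      rw [sdiff_eq_empty_iff_subset, h_sub.ge_iff_eq]
    · rw [if_neg fun h => h_sub h.subset, filter_false_of_mem, sum_empty]
      exact fun R _ h => h_sub (h.trans sdiff_subset)
  calc
    (#{a ∈ A | f a = T} : ℤ) =
        ∑ a ∈ A, ∑ R ∈ T.powerset, if f a ⊆ T \ R then (-1) ^ #R else 0 := by
      rw [natCast_card_filter]
      exact sum_congr rfl fun a _ => h_term a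
    _ = ∑ R ∈ T.powerset, ∑ a ∈ A, if f a ⊆ T \ R then (-1) ^ #R else 0 := sum_comm
    _ = _ := by simp only [← sum_filter, sum_const, nsmul_eq_mul, mul_comm]

lemma card_filter_card_eq_of_card_filter_subset [Fintype ι] {A : Finset α} {f : α → Finset ι}
    {N : ℕ → ℤ} (hN : ∀ S, (#{a ∈ A | f a ⊆ S} : ℤ) = N #S) (w : ℕ) :
    (#{a ∈ A | #(f a) = w} : ℤ) = (Fintype.card ι).choose w *
      ∑ j ∈ range (w + 1), (-1) ^ j * (w.choose j : ℤ) * N (w - j) := by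
  have h_fiber : ∀ T ∈ (univ : Finset ι).powersetCard w,
      (#{a ∈ {a ∈ A | #(f a) = w} | f a = T} : ℤ) =
        ∑ j ∈ range (w + 1), (-1) ^ j * (w.choose j : ℤ) * N (w - j) := by
    intro T hT
    obtain rfl := (mem_powersetCard.1 hT).2
    have h_filter : {a ∈ {a ∈ A | #(f a) = #T} | f a = T} = {a ∈ A | f a = T} := by
      rw [filter_filter]
      exact filter_congr fun a _ => and_iff_right_of_imp (congrArg card)
    have h_term : ∀ R ∈ T.powerset,
        (-1) ^ #R * (#{a ∈ A | f a ⊆ T \ R} : ℤ) = (-1) ^ #R * N (#T - #R) := by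
      intro R hR
      rw [hN, card_sdiff_of_subset (mem_powerset.1 hR)]
    rw [h_filter, card_filter_eq_sum_powerset, sum_congr rfl h_term,
      sum_powerset_apply_card fun j => (-1) ^ j * N (#T - j)]
    refine sum_congr rfl fun j _ => ?_
    rw [nsmul_eq_mul]
    ring
  have h_maps : Set.MapsTo f ({a ∈ A | #(f a) = w} : Finset α)
      ((univ : Finset ι).powersetCard w) :=
    fun a ha => mem_powersetCard.2 ⟨subset_univ _, (mem_filter.1 ha).2⟩
  rw [card_eq_sum_card_fiberwise h_maps, Nat.cast_sum, sum_congr rfl h_fiber, sum_const,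
    card_powersetCard, card_univ, nsmul_eq_mul]

end InclusionExclusion

section AlternatingSum

lemma sum_range_neg_one_pow_mul_choose_mul_sub (v m : ℕ) :
    ∑ j ∈ range (m + 1), (-1 : ℤ) ^ j * ((v + 2).choose j : ℤ) * ((v + 2 - j : ℕ) : ℤ) =
      (-1) ^ m * (v + 2) * (v.choose m : ℤ) := by
  have h_absorb : ∀ j, ((v + 2).choose j : ℤ) * ((v + 2 - j : ℕ) : ℤ) =
      (v + 2) * ((v + 1).choose j : ℤ) := by
    intro j
    rw [mul_comm (v + 2 : ℤ)]
    exact_mod_cast (Nat.choose_mul_succ_eq (v + 1) j).symm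
  calc
    _ = (v + 2) * ∑ j ∈ range (m + 1), (-1 : ℤ) ^ j * ((v + 1).choose j : ℤ) := by
      rw [mul_sum]
      refine sum_congr rfl fun j _ => ?_
      rw [mul_assoc, h_absorb, mul_left_comm]
    _ = _ := by
      rw [Int.alternating_sum_range_choose_eq_choose]
      ring

lemma sum_Ico_neg_one_pow_mul_choose_mul_sub {d w : ℕ} (hd : 3 ≤ d) (hw : d - 1 ≤ w) :
    ∑ j ∈ Ico (w + 2 - d) (w + 1), (-1 : ℤ) ^ j * (w.choose j : ℤ) * ((w - j : ℕ) : ℤ) =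
      (-1) ^ (w + d) * (w : ℤ) * ((w - 2).choose (d - 3) : ℤ) := by
  obtain ⟨e, rfl⟩ : ∃ e, d = e + 3 := ⟨d - 3, by omega⟩
  obtain ⟨m, rfl⟩ : ∃ m, w = m + e + 2 := ⟨w - (e + 2), by omega⟩
  have h_sign : (-1 : ℤ) ^ (m + e + 2 + (e + 3)) = -(-1) ^ m := by
    rw [show m + e + 2 + (e + 3) = m + 2 * (e + 2) + 1 by ring, pow_succ, pow_add, pow_mul]
    simp
  rw [show m + e + 2 + 2 - (e + 3) = m + 1 by omega, sum_Ico_eq_sub _ (by omega),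
    sum_range_neg_one_pow_mul_choose_mul_sub, sum_range_neg_one_pow_mul_choose_mul_sub, h_sign,
    Nat.choose_eq_zero_of_lt (show m + e < m + e + 2 by omega), Nat.add_sub_cancel,
    Nat.add_sub_cancel, Nat.choose_symm_add]
  push_cast
  ring

/-- For an MDS code of length `n` and minimum distance `d ≥ 3` over a field with `q` elements, the
number of vectors supported on a given set of `s` coordinates that lie in cosets of weight `1`.
It is integer-valued because it is summed with alternating signs. -/
def weightOneSupportedCount (q n : ℤ) (d s : ℕ) : ℤ :=
  (q - 1) * if s + 1 < d then (s : ℤ) else n * q ^ (s + 1 - d)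

lemma sum_neg_one_pow_mul_choose_mul_weightOneSupportedCount (q n : ℤ) {d w : ℕ} (hd : 3 ≤ d)
    (hw : d - 1 ≤ w) :
    ∑ j ∈ range (w + 1), (-1) ^ j * (w.choose j : ℤ) * weightOneSupportedCount q n d (w - j) =
      (q - 1) * (n * ∑ j ∈ range (w + 2 - d), (-1) ^ j * (w.choose j : ℤ) * q ^ (w + 1 - d - j) +
        (-1) ^ (w + d) * (w : ℤ) * ((w - 2).choose (d - 3) : ℤ)) := by
  rw [← sum_range_add_sum_Ico _ (show w + 2 - d ≤ w + 1 by omega),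
    ← sum_Ico_neg_one_pow_mul_choose_mul_sub hd hw, mul_add, mul_sum, mul_sum, mul_sum]
  congr 1
  · refine sum_congr rfl fun j hj => ?_
    rw [mem_range] at hj
    rw [weightOneSupportedCount, if_neg (by omega), show w - j + 1 - d = w + 1 - d - j by omega]
    ring
  · refine sum_congr rfl fun j hj => ?_
    rw [mem_Ico] at hj
    rw [weightOneSupportedCount, if_pos (by omega)]
    ring

end AlternatingSum

section SupportedOn

variable {ι : Type*} [Fintype ι] [DecidableEq ι]

/-- The coordinate subspace of the vectors that vanish outside `S`. -/
def supportedOn (R : Type*) [Semiring R] (S : Finset ι) : Submodule R (ι → R) :=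
  ⨅ i ∈ ((Sᶜ : Finset ι) : Set ι), LinearMap.ker (LinearMap.proj i : (ι → R) →ₗ[R] R)

lemma mem_supportedOn {R : Type*} [Semiring R] [DecidableEq R] {S : Finset ι} {x : ι → R} :
    x ∈ supportedOn R S ↔ hammingSupport x ⊆ S := by
  simp [supportedOn, hammingSupport, Finset.subset_iff, not_imp_comm]

lemma supportedOn_mono {R : Type*} [Semiring R] {S T : Finset ι} (h : S ⊆ T) :
    supportedOn R S ≤ supportedOn R T :=
  biInf_mono fun _ hi => mem_compl.2 fun hS => mem_compl.1 hi (h hS)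

lemma finrank_supportedOn {R : Type*} [Ring R] [StrongRankCondition R] (S : Finset ι) :
    Module.finrank R (supportedOn R S) = #S := by
  have h_disj : Disjoint (S : Set ι) ((Sᶜ : Finset ι) : Set ι) :=
    disjoint_coe.2 disjoint_compl_right
  have h_cover : Set.univ ⊆ (S : Set ι) ∪ ((Sᶜ : Finset ι) : Set ι) := by
    rw [← coe_union, union_compl, coe_univ]
  rw [supportedOn, (LinearMap.iInfKerProjEquiv R (fun _ : ι => R) h_disj h_cover).finrank_eq,
    Module.finrank_fintype_fun_eq_card]
  exact Fintype.card_coe S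

end SupportedOn

lemma ncard_mem_and_sub_mem_of_sup_eq_top {R M : Type*} [Ring R] [AddCommGroup M] [Module R M]
    {U C : Submodule R M} (h : U ⊔ C = ⊤) (y : M) :
    {x | x ∈ U ∧ x - y ∈ C}.ncard = Nat.card (U ⊓ C : Submodule R M) := by
  obtain ⟨u, hu, c, hc, rfl⟩ := Submodule.mem_sup.1 (h ▸ Submodule.mem_top : y ∈ U ⊔ C)
  have h_translate : {x | x ∈ U ∧ x - (u + c) ∈ C} =
      (u + ·) '' ((U ⊓ C : Submodule R M) : Set M) := by
    ext x
    rw [Set.image_add_left]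
    simp only [Set.mem_ofPred_eq, Set.mem_preimage, SetLike.mem_coe, Submodule.mem_inf,
      neg_add_eq_sub, ← sub_sub, Submodule.sub_mem_iff_left _ hc, Submodule.sub_mem_iff_left _ hu]
  rw [h_translate, Set.ncard_image_of_injective _ (add_right_injective u), ← Nat.card_coe_set_eq]
  rfl

section MinimumDistance

variable {ι F : Type*} [Fintype ι] [DivisionRing F] [DecidableEq F] {d : ℕ}
  {C : Submodule F (ι → F)}

lemma eq_of_sub_mem_of_hammingNorm_add_lt (hC : ∀ c ∈ C, c ≠ 0 → d ≤ hammingNorm c)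
    {x y : ι → F} (h_mem : x - y ∈ C) (h_lt : hammingNorm x + hammingNorm y < d) : x = y := by
  by_contra hxy
  have h_le := hC _ h_mem (sub_ne_zero.2 hxy)
  exact absurd (h_le.trans (hammingNorm_sub_le x y)) h_lt.not_ge

variable [DecidableEq ι]

lemma supportedOn_inf_eq_bot (hC : ∀ c ∈ C, c ≠ 0 → d ≤ hammingNorm c) {S : Finset ι}
    (hS : #S < d) : supportedOn F S ⊓ C = ⊥ := by
  refine (Submodule.eq_bot_iff _).2 fun c hc => ?_
  by_contra hc_ne
  have h_le : hammingNorm c ≤ #S :=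
    (card_hammingSupport c).symm.trans_le (card_le_card (mem_supportedOn.1 hc.1))
  exact (hC c hc.2 hc_ne).not_gt (h_le.trans_lt hS)

lemma supportedOn_sup_eq_top (hC : ∀ c ∈ C, c ≠ 0 → d ≤ hammingNorm c)
    (hMDS : d + Module.finrank F C = Fintype.card ι + 1) {S : Finset ι} (hS : d ≤ #S + 1) :
    supportedOn F S ⊔ C = ⊤ := by
  have h_finrank_le : Module.finrank F C ≤ Fintype.card ι := by
    simpa using Submodule.finrank_le C
  obtain ⟨T, hTS, hT⟩ := exists_subset_card_eq (show d - 1 ≤ #S by omega)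
  have h_dim := Submodule.finrank_sup_add_finrank_inf_eq (supportedOn F T) C
  rw [supportedOn_inf_eq_bot hC (by omega), finrank_bot, finrank_supportedOn] at h_dim
  have h_top : supportedOn F T ⊔ C = ⊤ := by
    apply Submodule.eq_top_of_finrank_eq
    rw [Module.finrank_fintype_fun_eq_card]
    omega
  exact top_le_iff.1 (h_top ▸ sup_le_sup_right (supportedOn_mono hTS) C)

lemma card_supportedOn_inf [Fintype F] (hC : ∀ c ∈ C, c ≠ 0 → d ≤ hammingNorm c)
    (hMDS : d + Module.finrank F C = Fintype.card ι + 1) {S : Finset ι} (hS : d ≤ #S + 1) :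
    Nat.card (supportedOn F S ⊓ C : Submodule F (ι → F)) = Fintype.card F ^ (#S + 1 - d) := by
  have h_dim := Submodule.finrank_sup_add_finrank_inf_eq (supportedOn F S) C
  rw [supportedOn_sup_eq_top hC hMDS hS, finrank_top, Module.finrank_fintype_fun_eq_card,
    finrank_supportedOn] at h_dim
  rw [Module.natCard_eq_pow_finrank (K := F), Nat.card_eq_fintype_card]
  congr 1
  omega

lemma ncard_supportedOn_inter_coset [Fintype F] (hC : ∀ c ∈ C, c ≠ 0 → d ≤ hammingNorm c)
    (hMDS : d + Module.finrank F C = Fintype.card ι + 1) {S : Finset ι} (hS : d ≤ #S + 1)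
    (y : ι → F) :
    {x | x ∈ supportedOn F S ∧ x - y ∈ C}.ncard = Fintype.card F ^ (#S + 1 - d) := by
  rw [ncard_mem_and_sub_mem_of_sup_eq_top (supportedOn_sup_eq_top hC hMDS hS),
    card_supportedOn_inf hC hMDS hS]

end MinimumDistance

section CosetWeight

variable {F : Type*} [Field F] [Fintype F] [DecidableEq F] {n : ℕ} {C : Submodule F (Fin n → F)}

lemma exists_hammingNorm_sub_eq_cosetWeight (C : Submodule F (Fin n → F)) (x : Fin n → F) :
    ∃ c ∈ C, hammingNorm (x - c) = cosetWeight C x :=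
  Nat.sInf_mem (s := {m | ∃ c ∈ C, hammingNorm (x - c) = m}) ⟨_, 0, C.zero_mem, rfl⟩

lemma cosetWeight_le_hammingNorm (C : Submodule F (Fin n → F)) (x : Fin n → F) :
    cosetWeight C x ≤ hammingNorm x :=
  Nat.sInf_le ⟨0, C.zero_mem, by rw [sub_zero]⟩

lemma cosetWeight_congr {x y : Fin n → F} (h : x - y ∈ C) : cosetWeight C x = cosetWeight C y := by
  have h_set : {m | ∃ c ∈ C, hammingNorm (x - c) = m} =
      {m | ∃ c ∈ C, hammingNorm (y - c) = m} := by
    ext m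
    constructor
    · rintro ⟨c, hc, rfl⟩
      exact ⟨c - (x - y), C.sub_mem hc h, by congr 1; abel⟩
    · rintro ⟨c, hc, rfl⟩
      exact ⟨c + (x - y), C.add_mem hc h, by congr 1; abel⟩
  rw [cosetWeight, h_set, cosetWeight]

variable {d : ℕ}

lemma cosetWeight_eq_hammingNorm (hC : ∀ c ∈ C, c ≠ 0 → d ≤ hammingNorm c) {x : Fin n → F}
    (h : hammingNorm x + cosetWeight C x < d) : cosetWeight C x = hammingNorm x := by
  obtain ⟨c, hc, hc_norm⟩ := exists_hammingNorm_sub_eq_cosetWeight C x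
  have h_leader : x = x - c :=
    eq_of_sub_mem_of_hammingNorm_add_lt hC (by rwa [sub_sub_cancel]) (by rwa [hc_norm])
  rw [← hc_norm, ← h_leader]

lemma existsUnique_hammingNorm_eq_cosetWeight (hC : ∀ c ∈ C, c ≠ 0 → d ≤ hammingNorm c)
    {x : Fin n → F} (hx : 2 * cosetWeight C x < d) :
    ∃! e, hammingNorm e = cosetWeight C x ∧ x - e ∈ C := by
  obtain ⟨c, hc, hc_norm⟩ := exists_hammingNorm_sub_eq_cosetWeight C x
  refine ⟨x - c, ⟨hc_norm, by rwa [sub_sub_cancel]⟩, ?_⟩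
  rintro e ⟨he_norm, he_mem⟩
  refine eq_of_sub_mem_of_hammingNorm_add_lt hC ?_ (by rwa [he_norm, hc_norm, ← two_mul])
  rw [show e - (x - c) = c - (x - e) by abel]
  exact C.sub_mem hc he_mem

lemma card_cosetWeight_eq_of_card_add_lt (hC : ∀ c ∈ C, c ≠ 0 → d ≤ hammingNorm c) {W : ℕ}
    {S : Finset (Fin n)} (hS : #S + W < d) :
    #{x : Fin n → F | cosetWeight C x = W ∧ hammingSupport x ⊆ S} =
      (#S).choose W * (Fintype.card F - 1) ^ W := by
  rw [← card_filter_hammingNorm_eq_of_subset]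
  congr 1
  refine filter_congr fun x _ => and_congr_left fun hx => ?_
  have h_norm : hammingNorm x ≤ #S := (card_hammingSupport x).symm.trans_le (card_le_card hx)
  have h_le := cosetWeight_le_hammingNorm C x
  constructor <;> rintro rfl
  · exact (cosetWeight_eq_hammingNorm hC (by omega)).symm
  · exact cosetWeight_eq_hammingNorm hC (by omega)

lemma card_cosetWeight_eq_of_le_card_add_one (hC : ∀ c ∈ C, c ≠ 0 → d ≤ hammingNorm c)
    (hMDS : d + Module.finrank F C = n + 1) {W : ℕ} (hW : 2 * W < d)
    {S : Finset (Fin n)} (hS : d ≤ #S + 1) :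
    #{x : Fin n → F | cosetWeight C x = W ∧ hammingSupport x ⊆ S} =
      n.choose W * (Fintype.card F - 1) ^ W * Fintype.card F ^ (#S + 1 - d) := by
  classical
  let leaders : Finset (Fin n → F) := {e | hammingNorm e = W}
  let vectors : Finset (Fin n → F) := {x | cosetWeight C x = W ∧ hammingSupport x ⊆ S}
  let sameCoset : (Fin n → F) → (Fin n → F) → Prop := fun e x => x - e ∈ C
  have h_leaders : #leaders = n.choose W * (Fintype.card F - 1) ^ W := by
    simpa using card_filter_hammingNorm_eq_of_subset (α := F) (univ : Finset (Fin n)) W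
  have h_above : ∀ e ∈ leaders,
      #(vectors.bipartiteAbove sameCoset e) = Fintype.card F ^ (#S + 1 - d) := by
    intro e he
    obtain rfl : hammingNorm e = W := by simpa [leaders] using he
    have h_weight : cosetWeight C e = hammingNorm e :=
      cosetWeight_eq_hammingNorm hC (by have := cosetWeight_le_hammingNorm C e; omega)
    rw [← ncard_supportedOn_inter_coset hC (by rwa [Fintype.card_fin]) hS e,
      ← Set.ncard_coe_finset]
    congr 1
    ext x
    simp only [bipartiteAbove, vectors, sameCoset, coe_filter, mem_filter_univ, Set.mem_ofPred_eq,
      mem_supportedOn]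
    exact and_congr_left fun hx => and_iff_right ((cosetWeight_congr hx).trans h_weight)
  have h_below : ∀ x ∈ vectors, #(leaders.bipartiteBelow sameCoset x) = 1 := by
    intro x hx
    obtain ⟨hx_weight, -⟩ : cosetWeight C x = W ∧ hammingSupport x ⊆ S := by
      simpa [vectors] using hx
    obtain ⟨e, he, he_unique⟩ :=
      existsUnique_hammingNorm_eq_cosetWeight hC (show 2 * cosetWeight C x < d by rwa [hx_weight])
    rw [hx_weight] at he he_unique
    refine card_eq_one.2 ⟨e, eq_singleton_iff_unique_mem.2 ⟨?_, fun e' he' => he_unique e' ?_⟩⟩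
    · simpa [bipartiteBelow, leaders, sameCoset] using he
    · simpa [bipartiteBelow, leaders, sameCoset] using he'
  rw [← h_leaders, card_mul_eq_card_mul sameCoset h_above h_below, mul_one]

lemma card_cosetWeight_eq_one_of_subset (hC : ∀ c ∈ C, c ≠ 0 → d ≤ hammingNorm c)
    (hMDS : d + Module.finrank F C = n + 1) (hd : 3 ≤ d) (S : Finset (Fin n)) :
    (#{x : Fin n → F | cosetWeight C x = 1 ∧ hammingSupport x ⊆ S} : ℤ) =
      weightOneSupportedCount (Fintype.card F) n d #S := by
  rw [weightOneSupportedCount, ← Nat.cast_pred Fintype.card_pos]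
  split_ifs with hS
  · rw [card_cosetWeight_eq_of_card_add_lt hC hS, Nat.choose_one_right, pow_one]
    push_cast
    ring
  · rw [card_cosetWeight_eq_of_le_card_add_one hC hMDS (by omega) (not_lt.1 hS),
      Nat.choose_one_right, pow_one]
    push_cast
    ring

lemma numVectorsCosetExact_eq_card (C : Submodule F (Fin n → F)) (w W : ℕ) :
    numVectorsCosetExact C w W =
      #{x ∈ ({x | cosetWeight C x = W} : Finset (Fin n → F)) | #(hammingSupport x) = w} := by
  rw [numVectorsCosetExact, ← Set.ncard_coe_finset]
  congr 1
  ext x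
  rw [mem_coe, mem_filter, mem_filter_univ, card_hammingSupport]
  exact and_comm

end CosetWeight

/-- **Integral weight spectrum of the weight-1 cosets of an MDS code** (Theorem 4.4(i),
eq. (4.3)).  For an `[n,k,d]_q` MDS code with `d ≥ 3` and `d-1 ≤ w ≤ n`,
`A_w^Σ(V^{(1)}) = C(n,w)(q-1)[ n ∑_{j=0}^{w+1-d} (-1)^j C(w,j) q^{w+1-d-j}
  + (-1)^{w-d} w C(w-2,d-3) ]`. -/
theorem numVectorsCosetExact_one_eq {F : Type*} [Field F] [Fintype F] [DecidableEq F]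
    (q n k d w : ℕ) (hq : Fintype.card F = q)
    (C : Submodule F (Fin n → F))
    (hk : Module.finrank F C = k) (hmin : HasMinDist C d) (hMDS : d + k = n + 1)
    (hd : 3 ≤ d) (hw1 : d - 1 ≤ w) (hwn : w ≤ n) :
    (numVectorsCosetExact C w 1 : ℤ) =
      (n.choose w : ℤ) * ((q : ℤ) - 1) *
        ((n : ℤ) * ∑ j ∈ Finset.range (w + 2 - d),
            (-1 : ℤ) ^ j * (w.choose j : ℤ) * (q : ℤ) ^ (w + 1 - d - j)
          + (-1 : ℤ) ^ (w + d) * (w : ℤ) * ((w - 2).choose (d - 3) : ℤ)) := by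
  subst hq hk
  have h_supported : ∀ S : Finset (Fin n),
      (#{x ∈ ({x | cosetWeight C x = 1} : Finset (Fin n → F)) | hammingSupport x ⊆ S} : ℤ) =
        weightOneSupportedCount (Fintype.card F) n d #S := by
    intro S
    rw [filter_filter, card_cosetWeight_eq_one_of_subset hmin.1 hMDS hd]
  rw [numVectorsCosetExact_eq_card, card_filter_card_eq_of_card_filter_subset h_supported,
    sum_neg_one_pow_mul_choose_mul_weightOneSupportedCount _ _ hd hw1, Fintype.card_fin,
    ← mul_assoc]
end

section
/- Let C be an [n, k, d]_q MDS code with minimum distance d ≥ 3, and let w be a natural number with d - 1 ≤ w ≤ n. Then the overall number A_w^Σ(V^{≤1}) of Hamming-weight-w vectors lying in cosets of C of weight at most 1 satisfies A_w^Σ(V^{≤1}) = A_w(C) · (1 + n(q-1)) - ε · n(q-1) · [ C(n, w) C(w-1, d-2) - C(n-1, w-1) C(w-2, d-3) ], as an identity of integers (here 1 + n(q-1) = V_n(1) is the volume of a Hamming sphere of radius 1 in F_q^n). -/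
open Finset

/-! Balls of radius one around the codewords are disjoint because `d ≥ 3`, so a vector of weight `w`
within distance one of `C` is counted once, at its codeword, and that codeword has weight `w - 1`,
`w` or `w + 1`. This expresses the count through `A_{w-1}(C)`, `A_w(C)` and `A_{w+1}(C)`.

The subcode of an MDS code supported in `j` given coordinates has dimension `max (j + 1 - d) 0`, so
the number of codewords with a given support of size `s` is the `s`-th forward difference at `0` of
`j ↦ q ^ max (j + 1 - d) 0`. This sequence is constant and then geometric, whence a recurrence
between consecutive support sizes with a binomial error term, by which `A_{w-1}(C)` and
`A_{w+1}(C)` are eliminated in favour of `A_w(C)`. -/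

section CoordSubspace

variable {ι F : Type*} [Field F]

/-- The space of vectors supported in the set `S` of coordinates. -/
def coordSubspace (F : Type*) [Field F] (S : Finset ι) : Submodule F (ι → F) :=
  ⨅ i ∈ (S : Set ι)ᶜ, LinearMap.ker (LinearMap.proj i)

lemma mem_coordSubspace {S : Finset ι} {x : ι → F} :
    x ∈ coordSubspace F S ↔ ∀ i ∉ S, x i = 0 := by
  simp [coordSubspace, Submodule.mem_iInf]

lemma coordSubspace_mono {S T : Finset ι} (h : S ⊆ T) :
    coordSubspace F S ≤ coordSubspace F T := fun _ hx =>
  mem_coordSubspace.2 fun i hi => mem_coordSubspace.1 hx i fun hS => hi (h hS)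

lemma finrank_coordSubspace (S : Finset ι) : Module.finrank F (coordSubspace F S) = #S := by
  classical
  have e := LinearMap.iInfKerProjEquiv F (fun _ : ι => F) (I := (S : Set ι)) (J := (S : Set ι)ᶜ)
    disjoint_compl_right (Set.union_compl_self _).ge
  rw [coordSubspace, e.finrank_eq, Module.finrank_fintype_fun_eq_card]
  simp

lemma hammingNorm_le_card_of_mem_coordSubspace [Fintype ι] [DecidableEq F] {S : Finset ι}
    {x : ι → F} (hx : x ∈ coordSubspace F S) : hammingNorm x ≤ #S :=
  card_le_card fun i hi => by
    by_contra hS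
    exact (mem_filter.1 hi).2 (mem_coordSubspace.1 hx i hS)

/-- Singleton bound: `D` meets trivially the space of vectors supported in `min (d - 1) #S`
coordinates of `S`. -/
lemma finrank_le_of_le_coordSubspace [Fintype ι] [DecidableEq F] {D : Submodule F (ι → F)}
    {S : Finset ι} {d : ℕ} (hDS : D ≤ coordSubspace F S)
    (hmin : ∀ c ∈ D, c ≠ 0 → d ≤ hammingNorm c) : Module.finrank F D ≤ #S + 1 - d := by
  obtain ⟨T, hTS, hT⟩ := exists_subset_card_eq (min_le_right (d - 1) #S)
  have hdisj : D ⊓ coordSubspace F T = ⊥ := by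
    refine (Submodule.eq_bot_iff _).2 fun c hc => by_contra fun h0 => ?_
    have h_ge := hmin c hc.1 h0
    have h_le := hammingNorm_le_card_of_mem_coordSubspace hc.2
    have h_pos := hammingNorm_pos_iff.2 h0
    omega
  have h_dim := Submodule.finrank_sup_add_finrank_inf_eq D (coordSubspace F T)
  have h_sup := Submodule.finrank_mono (sup_le hDS (coordSubspace_mono hTS))
  rw [hdisj, finrank_bot, finrank_coordSubspace] at h_dim
  rw [finrank_coordSubspace] at h_sup
  omega

end CoordSubspace

/-- The linear code `C` of length `|ι|` has minimum distance at least `d` and attains the Singleton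
bound. That some codeword has weight exactly `d` is not demanded; in particular the zero code
satisfies this with `d = |ι| + 1`. -/
structure IsMDS {ι F : Type*} [Fintype ι] [Field F] [DecidableEq F]
    (C : Submodule F (ι → F)) (d : ℕ) : Prop where
  le_hammingNorm : ∀ c ∈ C, c ≠ 0 → d ≤ hammingNorm c
  add_finrank : d + Module.finrank F C = Fintype.card ι + 1

section MDS

open fwdDiff

/-- The number of codewords, in an MDS code with minimum distance `d` over a field with `q`
elements, whose support is a given set of `s` coordinates. It is the `s`-th difference at `0` of
the size `q ^ max (j + 1 - d) 0` of the subcode supported in `j` given coordinates. -/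
def mdsSupportCount (q : ℤ) (d s : ℕ) : ℤ :=
  Δ_[1] ^[s] (fun j : ℕ => q ^ (j + 1 - d)) 0

variable {ι F : Type*} [Fintype ι] [Field F] [DecidableEq F] {C : Submodule F (ι → F)} {d : ℕ}

lemma IsMDS.finrank_inf_coordSubspace (hC : IsMDS C d) (S : Finset ι) :
    Module.finrank F ↑(C ⊓ coordSubspace F S) = #S + 1 - d := by
  have h_upper : Module.finrank F ↑(C ⊓ coordSubspace F S) ≤ #S + 1 - d :=
    finrank_le_of_le_coordSubspace inf_le_right fun c hc => hC.le_hammingNorm c hc.1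
  have h_dim := Submodule.finrank_sup_add_finrank_inf_eq C (coordSubspace F S)
  have h_sup := (C ⊔ coordSubspace F S).finrank_le
  rw [finrank_coordSubspace] at h_dim
  rw [Module.finrank_fintype_fun_eq_card] at h_sup
  have h_add := hC.add_finrank
  omega

variable [Fintype F] [DecidableEq ι] [DecidablePred (· ∈ C)]

lemma IsMDS.card_eq_zero_off (hC : IsMDS C d) (S : Finset ι) :
    #{c | c ∈ C ∧ ∀ i ∉ S, c i = 0} = Fintype.card F ^ (#S + 1 - d) := by
  classical
  rw [← hC.finrank_inf_coordSubspace S, ← Module.card_eq_pow_finrank, Fintype.card_subtype]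
  simp only [Submodule.mem_inf, mem_coordSubspace]

/-- Codewords nonvanishing at one more coordinate `a` are those that may be anything at `a`
minus those that vanish there, so every such coordinate contributes one forward difference. -/
lemma IsMDS.card_ne_zero_on_eq_zero_off (hC : IsMDS C d) {T R : Finset ι} (hTR : Disjoint T R) :
    (#{c | c ∈ C ∧ (∀ i ∈ T, c i ≠ 0) ∧ ∀ i ∉ T ∪ R, c i = 0} : ℤ) =
      Δ_[1] ^[#T] (fun j : ℕ => (Fintype.card F : ℤ) ^ (j + 1 - d)) #R := by
  induction T using Finset.induction_on generalizing R with
  | empty => simpa using congrArg (Nat.cast (R := ℤ)) (hC.card_eq_zero_off R)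
  | insert a T haT ih =>
    obtain ⟨haR, hTR⟩ := disjoint_insert_left.1 hTR
    have h_split :
        #{c | c ∈ C ∧ (∀ i ∈ T, c i ≠ 0) ∧ ∀ i ∉ T ∪ insert a R, c i = 0} =
          #{c | c ∈ C ∧ (∀ i ∈ insert a T, c i ≠ 0) ∧ ∀ i ∉ insert a T ∪ R, c i = 0} +
            #{c | c ∈ C ∧ (∀ i ∈ T, c i ≠ 0) ∧ ∀ i ∉ T ∪ R, c i = 0} := by
      rw [← card_filter_add_card_filter_not (fun c => c a ≠ 0), filter_filter, filter_filter]
      congr 2 <;> ext c <;> simp only [mem_filter, mem_univ, true_and] <;> grind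
    have h_any := ih (disjoint_insert_right.2 ⟨haT, hTR⟩)
    rw [h_split, Nat.cast_add, ih hTR, card_insert_of_notMem haR] at h_any
    rw [card_insert_of_notMem haT, Function.iterate_succ_apply', fwdDiff, ← h_any,
      add_sub_cancel_right]

lemma IsMDS.card_support_eq (hC : IsMDS C d) (S : Finset ι) :
    (#{c | c ∈ C ∧ ({i | c i ≠ 0} : Finset ι) = S} : ℤ) =
      mdsSupportCount (Fintype.card F) d #S := by
  rw [mdsSupportCount, ← card_empty, ← hC.card_ne_zero_on_eq_zero_off (disjoint_empty_right S)]
  congr 2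
  ext c
  simp only [mem_filter, mem_univ, true_and, Finset.ext_iff, union_empty]
  grind

lemma IsMDS.card_hammingNorm_eq (hC : IsMDS C d) (w : ℕ) :
    (#{c | c ∈ C ∧ hammingNorm c = w} : ℤ) =
      (Fintype.card ι).choose w * mdsSupportCount (Fintype.card F) d w := by
  have h_supp : ((#{c | c ∈ C ∧ hammingNorm c = w} : ℕ) : ℤ) =
      ∑ S ∈ powersetCard w univ, (#{c | c ∈ C ∧ ({i | c i ≠ 0} : Finset ι) = S} : ℤ) := by
    rw [card_eq_sum_card_fiberwise (f := fun c => ({i | c i ≠ 0} : Finset ι))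
      (t := powersetCard w univ) fun c hc => by
        simpa [mem_powersetCard, hammingNorm] using (mem_filter.1 hc).2.2, Nat.cast_sum]
    refine sum_congr rfl fun S hS => ?_
    congr 2
    ext c
    have hSw := (mem_powersetCard.1 hS).2
    simp only [mem_filter, mem_univ, true_and, hammingNorm]
    grind
  rw [h_supp, sum_congr rfl fun S hS => by
    rw [hC.card_support_eq, (mem_powersetCard.1 hS).2], sum_const, card_powersetCard, card_univ,
    nsmul_eq_mul]

end MDS

section Recurrence

open fwdDiff

lemma fwdDiff_iter_single_one_zero (m s : ℕ) :
    Δ_[1] ^[s] (Pi.single m 1 : ℕ → ℤ) 0 = (-1) ^ (s + m) * s.choose m := by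
  rw [fwdDiff_iter_eq_sum_shift]
  rcases le_or_gt m s with hms | hms
  · rw [sum_eq_single_of_mem m (mem_range_succ_iff.2 hms) fun k _ hk => by simp [hk]]
    have h_sign : (-1 : ℤ) ^ (s + m) = (-1) ^ (s - m) := by
      rw [show s + m = (s - m) + 2 * m by omega, pow_add, pow_mul, neg_one_sq, one_pow, mul_one]
    simp [h_sign]
  · rw [Nat.choose_eq_zero_of_lt hms, Nat.cast_zero, mul_zero]
    refine sum_eq_zero fun k hk => ?_
    have hkm : k ≠ m := by have := mem_range.1 hk; omega
    simp [hkm]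

/-- `j ↦ q ^ (j + 1 - d)` is constant up to `j = d - 1` and then geometric; the second-order
difference below kills both regimes and only sees the kink. -/
lemma fwdDiff_fwdDiff_sub_smul_pow (q : ℤ) {d : ℕ} (hd : 2 ≤ d) :
    Δ_[1] (Δ_[1] (fun j : ℕ => q ^ (j + 1 - d)) - (q - 1) • fun j : ℕ => q ^ (j + 1 - d)) =
      (q - 1) • Pi.single (d - 2) 1 := by
  funext j
  simp only [fwdDiff, Pi.sub_apply, Pi.smul_apply, smul_eq_mul]
  rcases lt_trichotomy j (d - 2) with h | rfl | h
  · rw [Pi.single_eq_of_ne h.ne, show j + 1 + 1 + 1 - d = 0 by omega,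
      show j + 1 + 1 - d = 0 by omega, show j + 1 - d = 0 by omega]
    ring
  · rw [Pi.single_eq_same, show d - 2 + 1 + 1 + 1 - d = 1 by omega,
      show d - 2 + 1 + 1 - d = 0 by omega, show d - 2 + 1 - d = 0 by omega]
    ring
  · obtain ⟨k, rfl⟩ : ∃ k, j = d - 1 + k := ⟨j - (d - 1), by omega⟩
    rw [Pi.single_eq_of_ne h.ne', show d - 1 + k + 1 + 1 + 1 - d = k + 2 by omega,
      show d - 1 + k + 1 + 1 - d = k + 1 by omega, show d - 1 + k + 1 - d = k by omega]
    ring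

lemma mdsSupportCount_add_two (q : ℤ) {d : ℕ} (hd : 2 ≤ d) (s : ℕ) :
    mdsSupportCount q d (s + 2) =
      (q - 1) * (mdsSupportCount q d (s + 1) + (-1) ^ (s + d) * s.choose (d - 2)) := by
  set h : ℕ → ℤ := fun j => q ^ (j + 1 - d) with h_def
  have h_kink := congrArg (fun g => Δ_[1] ^[s] g 0) (fwdDiff_fwdDiff_sub_smul_pow q hd)
  have h_sub : Δ_[1] (Δ_[1] h - (q - 1) • h) = Δ_[1] (Δ_[1] h) + (-(q - 1)) • Δ_[1] h := by
    rw [sub_eq_add_neg, ← neg_smul, fwdDiff_add, fwdDiff_const_smul]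
  simp only [← h_def, h_sub, fwdDiff_iter_add, fwdDiff_iter_const_smul, Pi.add_apply,
    Pi.smul_apply, smul_eq_mul, fwdDiff_iter_single_one_zero,
    ← Function.iterate_succ_apply] at h_kink
  have h_sign : (-1 : ℤ) ^ (s + d) = (-1) ^ (s + (d - 2)) := by
    rw [show s + d = s + (d - 2) + 2 by omega, pow_add, neg_one_sq, mul_one]
  simp only [mdsSupportCount, ← h_def, h_sign]
  linear_combination h_kink

end Recurrence

section Binomial

lemma add_one_mul_cast_choose_add_one (n w : ℕ) :
    ((w : ℤ) + 1) * n.choose (w + 1) = (n - w) * n.choose w := by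
  rcases le_or_gt w n with h | h
  · have h_nat := Nat.choose_succ_right_eq n w
    zify [h] at h_nat
    linear_combination h_nat
  · simp [Nat.choose_eq_zero_of_lt h, Nat.choose_eq_zero_of_lt (h.trans (Nat.lt_succ_self w))]

lemma mul_choose_sub_one_eq (n w : ℕ) :
    n * (n - 1).choose w = (w + 1) * n.choose (w + 1) := by
  cases n with
  | zero => simp
  | succ n => rw [Nat.add_sub_cancel, Nat.add_one_mul_choose_eq, mul_comm]

end Binomial

section Sphere

lemma hammingNorm_sub_eq_hammingDist {ι G : Type*} [Fintype ι] [AddCommGroup G] [DecidableEq G]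
    (x y : ι → G) : hammingNorm (x - y) = hammingDist x y := by
  rw [hammingDist_comm, hammingDist_eq_hammingNorm, neg_add_eq_sub]

variable {ι F : Type*} [Fintype ι] [DecidableEq ι] [DecidableEq F]

lemma hammingDist_eq_one_iff {x c : ι → F} :
    hammingDist x c = 1 ↔ ∃ i, ∃ a ≠ c i, Function.update c i a = x := by
  rw [hammingDist, card_eq_one]
  refine exists_congr fun i => ⟨fun h => ⟨x i, ?_, ?_⟩, ?_⟩
  · simpa using h.ge (mem_singleton_self i)
  · refine Function.update_eq_iff.2 ⟨rfl, fun j hj => ?_⟩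
    by_contra hne
    exact hj (mem_singleton.1 (h.le (mem_filter.2 ⟨mem_univ j, Ne.symm hne⟩)))
  · rintro ⟨a, ha, rfl⟩
    ext j
    by_cases hj : j = i
    · subst hj; simpa using ha
    · simp [hj]

lemma card_hammingDist_le_one_and [Fintype F] (c : ι → F) (p : (ι → F) → Prop) [DecidablePred p] :
    #{x | hammingDist x c ≤ 1 ∧ p x} =
      (if p c then 1 else 0) + #{x | hammingDist x c = 1 ∧ p x} := by
  simp only [Nat.le_one_iff_eq_zero_or_eq_one, or_and_right, filter_or]
  rw [card_union_of_disjoint (disjoint_filter.2 fun x _ h h' => by omega)]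
  simp only [hammingDist_eq_zero, ← filter_filter, filter_eq', mem_univ, if_true, filter_singleton,
    apply_ite card, card_singleton, card_empty]

lemma card_hammingDist_eq_one_and [Fintype F] (c : ι → F) (p : (ι → F) → Prop) [DecidablePred p] :
    #{x | hammingDist x c = 1 ∧ p x} = ∑ i, #{a | a ≠ c i ∧ p (Function.update c i a)} := by
  rw [← card_sigma]
  symm
  refine card_nbij (fun y => Function.update c y.1 y.2) ?_ ?_ ?_
  · rintro ⟨i, a⟩ hy
    obtain ⟨ha, hp⟩ := (mem_filter.1 (mem_sigma.1 hy).2).2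
    exact mem_filter.2 ⟨mem_univ _, hammingDist_eq_one_iff.2 ⟨i, a, ha, rfl⟩, hp⟩
  · rintro ⟨i, a⟩ hy ⟨i', a'⟩ - h
    have ha : a ≠ c i := (mem_filter.1 (mem_sigma.1 hy).2).2.1
    have hi : i = i' := by
      by_contra hne
      exact ha (by simpa [hne] using congrFun h i)
    subst hi
    exact congrArg (Sigma.mk i) (Function.update_injective c i h)
  · intro x hx
    obtain ⟨h_dist, hp⟩ := (mem_filter.1 hx).2
    obtain ⟨i, a, ha, rfl⟩ := hammingDist_eq_one_iff.1 h_dist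
    exact ⟨⟨i, a⟩, mem_sigma.2 ⟨mem_univ _, mem_filter.2 ⟨mem_univ _, ha, hp⟩⟩, rfl⟩

variable [Zero F]

lemma hammingNorm_update_add (c : ι → F) (i : ι) (a : F) :
    hammingNorm (Function.update c i a) + (if c i = 0 then 0 else 1) =
      hammingNorm c + if a = 0 then 0 else 1 := by
  have h_off : ∑ j ∈ {i}ᶜ, (if Function.update c i a j = 0 then 0 else 1) =
      ∑ j ∈ {i}ᶜ, if c j = 0 then 0 else 1 :=
    sum_congr rfl fun j hj => by rw [Function.update_of_ne (by simpa using hj)]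
  simp only [hammingNorm, card_filter, ite_not, Fintype.sum_eq_add_sum_compl i, h_off,
    Function.update_self]
  ring

variable [Fintype F]

lemma card_ne_and_hammingNorm_update_eq_of_eq_zero {c : ι → F} {i : ι} (hi : c i = 0) (w : ℕ) :
    #{a | a ≠ c i ∧ hammingNorm (Function.update c i a) = w} =
      if hammingNorm c + 1 = w then Fintype.card F - 1 else 0 := by
  have h_norm (a : F) (ha : a ≠ 0) : hammingNorm (Function.update c i a) = hammingNorm c + 1 := by
    simpa [hi, ha] using hammingNorm_update_add c i a
  rw [hi, filter_congr fun a _ => and_congr_right fun ha => by rw [h_norm a ha]]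
  split_ifs with hw
  · simp [hw, filter_ne']
  · simp [hw]

lemma card_ne_and_hammingNorm_update_eq_of_ne_zero {c : ι → F} {i : ι} (hi : c i ≠ 0) (w : ℕ) :
    #{a | a ≠ c i ∧ hammingNorm (Function.update c i a) = w} =
      (if hammingNorm c = w + 1 then 1 else 0) +
        if hammingNorm c = w then Fintype.card F - 2 else 0 := by
  have h_norm_zero : hammingNorm (Function.update c i 0) + 1 = hammingNorm c := by
    simpa [hi] using hammingNorm_update_add c i 0
  have h_norm (a : F) (ha : a ≠ 0) : hammingNorm (Function.update c i a) = hammingNorm c := by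
    simpa [hi, ha] using hammingNorm_update_add c i a
  rw [← card_filter_add_card_filter_not (fun a => a = 0), filter_filter, filter_filter]
  congr 1
  · rw [filter_congr (q := fun a => a = 0 ∧ hammingNorm c = w + 1) fun a _ => by grind]
    split_ifs with hw <;> simp [hw, filter_eq']
  · rw [filter_congr (q := fun a => a ∉ ({0, c i} : Finset F) ∧ hammingNorm c = w)
      fun a _ => by grind]
    split_ifs with hw
    · simp only [hw, and_true]
      rw [filter_not, filter_mem_eq_inter, univ_inter, ← compl_eq_univ_sdiff, card_compl,
        card_pair hi.symm]
    · simp [hw]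

/-- A weight of `w + 1` is reached from weight `w` by filling a zero coordinate, from weight
`w + 1` by changing a nonzero one, and from weight `w + 2` by erasing one. -/
lemma card_hammingDist_eq_one_and_hammingNorm_eq [Nontrivial F] (c : ι → F) (w : ℕ) :
    (#{x | hammingDist x c = 1 ∧ hammingNorm x = w + 1} : ℤ) =
      (if hammingNorm c = w then ((Fintype.card ι : ℤ) - w) * ((Fintype.card F : ℤ) - 1) else 0) +
        (if hammingNorm c = w + 1 then ((w : ℤ) + 1) * ((Fintype.card F : ℤ) - 2) else 0) +
          if hammingNorm c = w + 2 then (w : ℤ) + 2 else 0 := by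
  have h_card : 2 ≤ Fintype.card F := Fintype.one_lt_card
  have h_zero : #{i | c i = 0} + hammingNorm c = Fintype.card ι :=
    card_filter_add_card_filter_not _
  rw [card_hammingDist_eq_one_and c, ← sum_filter_add_sum_filter_not _ (fun i => c i = 0),
    sum_congr rfl fun i hi =>
      card_ne_and_hammingNorm_update_eq_of_eq_zero (mem_filter.1 hi).2 (w + 1),
    sum_congr rfl fun i hi =>
      card_ne_and_hammingNorm_update_eq_of_ne_zero (mem_filter.1 hi).2 (w + 1),
    sum_const, sum_const, ← hammingNorm, ← h_zero, smul_eq_mul, smul_eq_mul]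
  push_cast [h_card, one_le_two.trans h_card]
  split_ifs <;> first | omega | simp_all

end Sphere

section Cosets

variable {F : Type*} [Field F] [Fintype F] [DecidableEq F] {n : ℕ} {C : Submodule F (Fin n → F)}

lemma cosetWeight_le_iff {x : Fin n → F} {W : ℕ} :
    cosetWeight C x ≤ W ↔ ∃ c ∈ C, hammingDist x c ≤ W := by
  simp only [← hammingNorm_sub_eq_hammingDist]
  constructor
  · intro h
    obtain ⟨c, hc, h_eq⟩ := Nat.sInf_mem (s := {m | ∃ c ∈ C, hammingNorm (x - c) = m})
      ⟨_, 0, C.zero_mem, rfl⟩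
    exact ⟨c, hc, h_eq.trans_le h⟩
  · rintro ⟨c, hc, h⟩
    have h_le : cosetWeight C x ≤ hammingNorm (x - c) := Nat.sInf_le ⟨c, hc, rfl⟩
    exact h_le.trans h

lemma numCodewordsOfWeight_eq_card [DecidablePred (· ∈ C)] (w : ℕ) :
    numCodewordsOfWeight C w = #{c | c ∈ C ∧ hammingNorm c = w} := by
  rw [numCodewordsOfWeight, ← Set.ncard_coe_finset]
  simp

lemma numVectorsCosetLe_eq_sum [DecidablePred (· ∈ C)] {W : ℕ}
    (hmin : ∀ c ∈ C, c ≠ 0 → 2 * W < hammingNorm c) (w : ℕ) :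
    numVectorsCosetLe C w W =
      ∑ c with c ∈ C, #{x | hammingDist x c ≤ W ∧ hammingNorm x = w} := by
  rw [← card_biUnion, numVectorsCosetLe, ← Set.ncard_coe_finset]
  · congr 1
    ext x
    simp only [cosetWeight_le_iff, Set.mem_ofPred_eq, coe_biUnion, coe_filter, Set.mem_iUnion,
      mem_univ, true_and, exists_prop]
    grind
  · intro c hc c' hc' hne
    refine disjoint_left.2 fun x hx hx' => ?_
    have h_far := hmin _ (C.sub_mem (mem_filter.1 hc).2 (mem_filter.1 hc').2) (sub_ne_zero.2 hne)
    have h_near := hammingDist_triangle_left c c' x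
    rw [hammingNorm_sub_eq_hammingDist] at h_far
    have h_dist := (mem_filter.1 hx).2.1
    have h_dist' := (mem_filter.1 hx').2.1
    omega

lemma sum_ite_hammingNorm_eq [DecidablePred (· ∈ C)] (w : ℕ) (a : ℤ) :
    ∑ c with c ∈ C, (if hammingNorm c = w then a else 0) = numCodewordsOfWeight C w * a := by
  rw [← sum_filter, filter_filter, sum_const, numCodewordsOfWeight_eq_card, nsmul_eq_mul]

lemma numVectorsCosetLe_one_eq (hmin : ∀ c ∈ C, c ≠ 0 → 3 ≤ hammingNorm c) (w : ℕ) :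
    (numVectorsCosetLe C (w + 1) 1 : ℤ) =
      (n - w) * (Fintype.card F - 1) * numCodewordsOfWeight C w +
        (1 + (w + 1) * (Fintype.card F - 2)) * numCodewordsOfWeight C (w + 1) +
          (w + 2) * numCodewordsOfWeight C (w + 2) := by
  classical
  rw [numVectorsCosetLe_eq_sum fun c hc h0 => hmin c hc h0, Nat.cast_sum]
  simp only [card_hammingDist_le_one_and, Nat.cast_add, Nat.cast_ite, Nat.cast_one, Nat.cast_zero,
    card_hammingDist_eq_one_and_hammingNorm_eq, sum_add_distrib, sum_ite_hammingNorm_eq,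
    Fintype.card_fin]
  ring

lemma IsMDS.numCodewordsOfWeight_eq {d : ℕ} (hC : IsMDS C d) (w : ℕ) :
    (numCodewordsOfWeight C w : ℤ) = n.choose w * mdsSupportCount (Fintype.card F) d w := by
  classical
  rw [numCodewordsOfWeight_eq_card, hC.card_hammingNorm_eq, Fintype.card_fin]

end Cosets

theorem numVectorsCosetLe_one_eq'_general {F : Type*} [Field F] [Fintype F] [DecidableEq F]
    {n d w : ℕ} {C : Submodule F (Fin n → F)} (hC : IsMDS C d) (hd : 3 ≤ d) (hw : 2 ≤ w) :
    (numVectorsCosetLe C w 1 : ℤ) =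
      numCodewordsOfWeight C w * (1 + n * (Fintype.card F - 1)) -
        (-1) ^ (w + d) * n * (Fintype.card F - 1) *
          (n.choose w * (w - 1).choose (d - 2) -
            (n - 1).choose (w - 1) * (w - 2).choose (d - 3)) := by
  obtain ⟨v, rfl⟩ := Nat.exists_eq_add_of_le' hw
  obtain ⟨e, rfl⟩ := Nat.exists_eq_add_of_le' hd
  rw [numVectorsCosetLe_one_eq fun c hc h0 => hd.trans (hC.le_hammingNorm c hc h0)]
  simp only [hC.numCodewordsOfWeight_eq]
  have h_rec_up := mdsSupportCount_add_two (Fintype.card F) (by omega : 2 ≤ e + 3) (v + 1)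
  have h_rec_down := mdsSupportCount_add_two (Fintype.card F) (by omega : 2 ≤ e + 3) v
  have h_choose_up := add_one_mul_cast_choose_add_one n (v + 2)
  have h_choose_down := add_one_mul_cast_choose_add_one n (v + 1)
  have h_absorb := congrArg (Nat.cast (R := ℤ)) (mul_choose_sub_one_eq n (v + 1))
  have h_pascal := congrArg (Nat.cast (R := ℤ)) (Nat.choose_succ_succ v e)
  simp only [Nat.add_sub_cancel_right, Nat.reduceSubDiff] at h_rec_up h_rec_down ⊢
  push_cast at h_choose_up h_choose_down h_absorb h_pascal h_rec_up h_rec_down ⊢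
  set q : ℤ := (Fintype.card F : ℤ)
  linear_combination mdsSupportCount q (e + 3) (v + 3) * h_choose_up
    - (q - 1) * mdsSupportCount q (e + 3) (v + 1) * h_choose_down
    + n.choose (v + 2) * (n - (v + 2)) * h_rec_up - (v + 2) * n.choose (v + 2) * h_rec_down
    + (-1) ^ (v + e) * (q - 1) * v.choose e * h_absorb
    - (-1) ^ (v + e) * (q - 1) * n.choose (v + 2) * (v + 2) * h_pascal

/-- **Integral weight spectrum of cosets of weight ≤ 1 of an MDS code** (Corollary 4.5,
eq. (4.10)).  For an `[n,k,d]_q` MDS code with `d ≥ 3` and `d-1 ≤ w ≤ n`,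
`A_w^Σ(V^{≤1}) = A_w(C)·V_n(1)
  - (-1)^{w-d} n(q-1)[ C(n,w)C(w-1,d-2) - C(n-1,w-1)C(w-2,d-3) ]`,
where `V_n(1) = 1 + n(q-1)`. -/
theorem numVectorsCosetLe_one_eq' {F : Type*} [Field F] [Fintype F] [DecidableEq F]
    (q n k d w : ℕ) (hq : Fintype.card F = q)
    (C : Submodule F (Fin n → F))
    (hk : Module.finrank F C = k) (hmin : HasMinDist C d) (hMDS : d + k = n + 1)
    (hd : 3 ≤ d) (hw1 : d - 1 ≤ w) (hwn : w ≤ n) :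
    (numVectorsCosetLe C w 1 : ℤ) =
      (numCodewordsOfWeight C w : ℤ) * (1 + (n : ℤ) * ((q : ℤ) - 1))
        - (-1 : ℤ) ^ (w + d) * (n : ℤ) * ((q : ℤ) - 1) *
          ((n.choose w : ℤ) * ((w - 1).choose (d - 2) : ℤ)
            - ((n - 1).choose (w - 1) : ℤ) * ((w - 2).choose (d - 3) : ℤ)) := by
  subst hq hk
  have hC : IsMDS C d := ⟨hmin.1, hMDS.trans (congrArg (· + 1) (Fintype.card_fin n).symm)⟩
  exact numVectorsCosetLe_one_eq'_general hC hd (by omega)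
end
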